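/- For every positive integer N there exist a finite set V, a map φ : V → Δ_3, three distinguished elements t_1, t_2, t_3 ∈ V with φ(t_i) = e_i for i = 1,2,3, a finite set E of unordered pairs of elements of V, and weights w : E → ℝ_{≥0}, such that: (a) the embedded volume satisfies ∑_{{u,v}∈E} w({u,v})·(1/2)·∑_{i=1}^3 |φ(u)_i − φ(v)_i| = 11N + 1; and (b) for every coloring f : V → {1,2,3} with f(t_i) = i for i = 1,2,3, the total weight of bichromatic edges satisfies ∑_{{u,v}∈E, f(u)≠f(v)} w({u,v}) ≥ 12N. (Hence the integrality gap of the geometric relaxation of 3-way cut is at least 12N/(11N+1).) -/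

import Mathlib

/-- The length of the segment between the embedded endpoints of an unordered pair,
i.e. half the `L1` distance between the embedded endpoints. -/
noncomputable def edgeLength {V : Type} (φ : V → Fin 3 → ℝ) : Sym2 V → ℝ :=
  Sym2.lift ⟨fun u v => (1 / 2) * ∑ i, |φ u i - φ v i|,
    fun u v => by
      have : ∑ i, |φ u i - φ v i| = ∑ i, |φ v i - φ u i| :=
        Finset.sum_congr rfl fun i _ => abs_sub_comm _ _
      show (1:ℝ) / 2 * ∑ i, |φ u i - φ v i| = (1:ℝ) / 2 * ∑ i, |φ v i - φ u i|
      rw [this]⟩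

/-- Indicator that an unordered pair is bichromatic under a coloring `f`. -/
def bichromatic {V : Type} (f : V → Fin 3) : Sym2 V → ℝ :=
  Sym2.lift ⟨fun u v => if f u = f v then 0 else 1,
    fun u v => by by_cases h : f u = f v <;> simp [h, eq_comm]⟩

/-!
The graph is a triangular mesh of side `3N` in the simplex, so that every edge has length
`1 / (3N)`. Its cuts are handled by planar duality: a cut is a set of edges of the dual graph, whose
nodes are the small triangles and the three sides of the big one. Viewing a 3-way colouring as a
function with values in `ℤ/3` and applying a discrete Stokes theorem to a union of components of
the dual cut graph shows that the number of sides in it is divisible by `3`; hence a cut joins all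
three sides, and contains three edge-disjoint dual paths running from a common node to the sides.
For the weights chosen here, each side has a potential which is 1-Lipschitz for the dual weights and
vanishes at that side, and the three potentials add up to at least `12N` at every node; so the
three paths together weigh at least `12N`.
-/

section Tripod

variable {V ι R : Type*} {G : SimpleGraph V}

theorem exists_walk_forall_edges_not_subset {S : Set V} {u v : V} (p : G.Walk u v) (hv : v ∈ S) :
    ∃ c ∈ S, ∃ q : G.Walk u c, ∀ e ∈ q.edges, ∃ x ∈ e, x ∉ S := by
  induction p with
  | nil => exact ⟨_, hv, .nil, by simp⟩
  | @cons u _ _ h _ ih =>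
    by_cases hu : u ∈ S
    · exact ⟨u, hu, .nil, by simp⟩
    · obtain ⟨c, hc, q, hq⟩ := ih hv
      refine ⟨c, hc, .cons h q, fun e he => ?_⟩
      rw [SimpleGraph.Walk.edges_cons, List.mem_cons] at he
      rcases he with rfl | he
      · exact ⟨u, Sym2.mem_mk_left _ _, hu⟩
      · exact hq e he

theorem exists_tripod {a b c : V} (hab : G.Reachable a b) (hac : G.Reachable a c) :
    ∃ (v : V) (p : G.Walk v a) (q : G.Walk v b) (r : G.Walk v c),
      (p.edges ++ (q.edges ++ r.edges)).Nodup := by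
  classical
  obtain ⟨l, hl⟩ := hab.exists_isPath
  obtain ⟨k⟩ := hac.symm
  obtain ⟨v, hv, r, hr⟩ :=
    exists_walk_forall_edges_not_subset (S := {x | x ∈ l.support}) k l.start_mem_support
  refine ⟨v, (l.takeUntil v hv).reverse, l.dropUntil v hv, r.bypass.reverse, ?_⟩
  have hdisj : l.edges.Disjoint r.bypass.edges := fun e hel her => by
    obtain ⟨x, hxe, hxl⟩ := hr e (r.edges_bypass_subset_edges her)
    exact hxl (l.mem_support_of_mem_edges hel hxe)
  have hnodup : (l.edges ++ r.bypass.edges).Nodup :=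
    hl.isTrail.edges_nodup.append r.bypass_isPath.isTrail.edges_nodup hdisj
  have hperm : ((l.takeUntil v hv).reverse.edges ++
      ((l.dropUntil v hv).edges ++ r.bypass.reverse.edges)).Perm (l.edges ++ r.bypass.edges) := by
    rw [SimpleGraph.Walk.edges_reverse, SimpleGraph.Walk.edges_reverse, ← List.append_assoc,
      ← congrArg SimpleGraph.Walk.edges (l.take_spec hv), SimpleGraph.Walk.edges_append]
    exact ((List.reverse_perm _).append_right _).append (List.reverse_perm _)
  exact hperm.nodup_iff.mpr hnodup

variable [AddCommGroup R] [PartialOrder R] [IsOrderedAddMonoid R]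

theorem sub_le_sum_map_edges {d : V → R} {ω : Sym2 V → R}
    (hd : ∀ u v, G.Adj u v → d u - d v ≤ ω s(u, v)) {u v : V} (p : G.Walk u v) :
    d u - d v ≤ (p.edges.map ω).sum := by
  induction p with
  | nil => simp
  | @cons u v w h p ih =>
    rw [SimpleGraph.Walk.edges_cons, List.map_cons, List.sum_cons, ← sub_add_sub_cancel _ (d v)]
    exact add_le_add (hd u v h) ih

theorem le_sum_weight_of_potentials {I : Finset ι} {ends : ι → Sym2 V} {w : ι → R}
    {s : Fin 3 → V} {d : Fin 3 → V → R} {C : R} (hw : ∀ e ∈ I, 0 ≤ w e)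
    (hs : ∀ i, (SimpleGraph.fromEdgeSet (ends '' I)).Reachable (s 0) (s i))
    (hd : ∀ i, ∀ e ∈ I, ∀ u v, ends e = s(u, v) → d i u - d i v ≤ w e)
    (hC : ∀ v, C ≤ ∑ i, (d i v - d i (s i))) :
    C ≤ ∑ e ∈ I, w e := by
  classical
  -- The paths of the tripod share no edge, so their total weight is at most the weight of `I`.
  set H := SimpleGraph.fromEdgeSet (ends '' I)
  let ω : Sym2 V → R := fun z => ∑ e ∈ I with ends e = z, w e
  have hω : ∀ i u v, H.Adj u v → d i u - d i v ≤ ω s(u, v) := by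
    intro i u v huv
    obtain ⟨e, he, hends⟩ := ((SimpleGraph.fromEdgeSet_adj _).mp huv).1
    exact (hd i e he u v hends).trans <| Finset.single_le_sum (f := w)
      (fun e he => hw e (Finset.mem_filter.mp he).1) (Finset.mem_filter.mpr ⟨he, hends⟩)
  obtain ⟨v, p, q, r, hnodup⟩ := exists_tripod (hs 1) (hs 2)
  calc C ≤ ∑ i, (d i v - d i (s i)) := hC v
    _ = (d 0 v - d 0 (s 0)) + ((d 1 v - d 1 (s 1)) + (d 2 v - d 2 (s 2))) := by
      rw [Fin.sum_univ_three, add_assoc]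
    _ ≤ ((p.edges ++ (q.edges ++ r.edges)).map ω).sum := by
      rw [List.map_append, List.map_append, List.sum_append, List.sum_append]
      exact add_le_add (sub_le_sum_map_edges (hω 0) p) (add_le_add
        (sub_le_sum_map_edges (hω 1) q) (sub_le_sum_map_edges (hω 2) r))
    _ = ∑ z ∈ (p.edges ++ (q.edges ++ r.edges)).toFinset, ω z :=
      (List.sum_toFinset ω hnodup).symm
    _ ≤ ∑ e ∈ I, w e :=
      Finset.sum_fiberwise_le_sum_of_sum_fiber_nonneg fun z _ =>
        Finset.sum_nonneg fun e he => hw e (Finset.mem_filter.mp he).1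

end Tripod

section SymSums

variable {α A : Type*} [Fintype α] [DecidableEq α] [AddCommMonoid A] {n : ℕ}

theorem sum_filter_mem_sym_succ (a : α) (g : Sym α (n + 1) → A) :
    ∑ p with a ∈ p, g p = ∑ q : Sym α n, g (a ::ₛ q) := by
  refine (Finset.sum_bij (fun q _ => a ::ₛ q) ?_ ?_ ?_ fun _ _ => rfl).symm
  · simp
  · simp
  · intro p hp
    obtain ⟨q, rfl⟩ := Sym.exists_cons_of_mem (Finset.mem_filter.mp hp).2
    exact ⟨q, Finset.mem_univ q, rfl⟩

theorem sum_sym_succ (a : α) (g : Sym α (n + 1) → A) :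
    ∑ p, g p = ∑ p with a ∉ p, g p + ∑ q : Sym α n, g (a ::ₛ q) := by
  rw [← sum_filter_mem_sym_succ, ← Finset.sum_filter_add_sum_filter_not _ (a ∈ ·), add_comm]

end SymSums

section Coord

variable {n : ℕ}

/-- The barycentric coordinates of a lattice point of the triangle of side `n`. Such a point is
encoded as a multiset of `n` corners, so that `Sym.replicate n i` is the `i`-th corner, `a ::ₛ p` is
the point `p` moved one step towards corner `a`, and `i ∉ p` says that `p` is on the side opposite
to corner `i`. -/
def coord (p : Sym (Fin 3) n) (i : Fin 3) : ℕ := (p : Multiset (Fin 3)).count i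

theorem coord_cons (a : Fin 3) (p : Sym (Fin 3) n) (i : Fin 3) :
    coord (a ::ₛ p) i = coord p i + if i = a then 1 else 0 := by
  simp only [coord, Sym.coe_cons, Multiset.count_cons]

theorem coord_eq_zero {p : Sym (Fin 3) n} {i : Fin 3} : coord p i = 0 ↔ i ∉ p := by
  simp [coord]

theorem sum_coord (p : Sym (Fin 3) n) : ∑ i, coord p i = n := by
  simp [coord]

theorem coord_replicate (i j : Fin 3) :
    coord (Sym.replicate n i) j = if i = j then n else 0 := by
  simp only [coord, Sym.coe_replicate, Multiset.count_replicate]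

/-- The depth of a lattice point inside the corner regions `2 * m ≤ coord p i`. At most one summand
is positive when `n ≤ 4 * m`. The subtraction is truncated on purpose. -/
def excess (m : ℕ) (p : Sym (Fin 3) n) : ℕ := ∑ i, (coord p i - 2 * m)

theorem excess_cons (m : ℕ) (a : Fin 3) (p : Sym (Fin 3) n) :
    excess m (a ::ₛ p) = excess m p + if 2 * m ≤ coord p a then 1 else 0 := by
  have hterm (i : Fin 3) : coord (a ::ₛ p) i - 2 * m =
      (coord p i - 2 * m) + if i = a then (if 2 * m ≤ coord p a then 1 else 0) else 0 := by
    rw [coord_cons]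
    split_ifs with hi h <;> lia
  simp only [excess, hterm, Finset.sum_add_distrib, Finset.sum_ite_eq', Finset.mem_univ, if_true]

theorem add_coord_le {i j : Fin 3} (hij : i ≠ j) (p : Sym (Fin 3) n) :
    coord p i + coord p j ≤ n :=
  calc coord p i + coord p j = ∑ l ∈ {i, j}, coord p l := (Finset.sum_pair hij).symm
    _ ≤ ∑ l, coord p l := Finset.sum_le_sum_of_subset (Finset.subset_univ _)
    _ = n := sum_coord p

/-- The weight of the edge opposite to corner `k` in the upward triangle at `p`: the sides of the
big triangle are heavy, and increasingly so towards the corners, while the inner edges have unit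
weight except that those parallel to side `k` are dropped near corner `k`. -/
def meshWeight (m : ℕ) (p : Sym (Fin 3) n) (k : Fin 3) : ℕ :=
  if k ∉ p then 2 * m + 1 + excess m p else if coord p k ≤ 2 * m then 1 else 0

/-- The endpoints of the mesh edge opposite to corner `x.2` in the upward triangle `x.1`. Every edge
of the mesh of side `n + 2` belongs to exactly one upward triangle, the one spanned by the points
`i ::ₛ p`. -/
def meshEnds (x : Sym (Fin 3) (n + 1) × Fin 3) : Sym2 (Sym (Fin 3) (n + 2)) :=
  s((x.2 + 1) ::ₛ x.1, (x.2 + 2) ::ₛ x.1)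

/-- The mesh edges whose endpoints are coloured differently by `f`. -/
def cutEdges {A : Type*} [DecidableEq A] (f : Sym (Fin 3) (n + 2) → A) :
    Finset (Sym (Fin 3) (n + 1) × Fin 3) :=
  {x | f ((x.2 + 1) ::ₛ x.1) ≠ f ((x.2 + 2) ::ₛ x.1)}

end Coord

section SideSums

variable {A : Type*} [AddCommMonoid A] {n : ℕ}

theorem sum_side_succ {i j l : Fin 3} (hij : i ≠ j) (hil : i ≠ l) (hjl : j ≠ l)
    (g : Sym (Fin 3) (n + 1) → A) :
    ∑ p with i ∉ p, g p =
      g (Sym.replicate (n + 1) l) + ∑ q : Sym (Fin 3) n with i ∉ q, g (j ::ₛ q) := by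
  have hcorner : ({p : Sym (Fin 3) (n + 1) | j ∉ p ∧ i ∉ p} : Finset _) =
      {Sym.replicate (n + 1) l} := by
    ext p
    simp only [Finset.mem_filter, Finset.mem_univ, true_and, Finset.mem_singleton,
      Sym.eq_replicate_iff]
    constructor
    · rintro ⟨hj, hi⟩ x hx
      have hxj : x ≠ j := ne_of_mem_of_not_mem hx hj
      have hxi : x ≠ i := ne_of_mem_of_not_mem hx hi
      lia
    · exact fun h => ⟨fun hj => hjl (h j hj), fun hi => hil (h i hi)⟩
  rw [Finset.sum_filter, sum_sym_succ j, ← Finset.sum_filter, Finset.filter_filter, hcorner,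
    Finset.sum_singleton, ← Finset.sum_filter]
  simp [Sym.mem_cons, hij]

theorem sum_side_sub_eq_sub {A : Type*} [AddCommGroup A] {i j l : Fin 3} (hij : i ≠ j)
    (hil : i ≠ l) (hjl : j ≠ l) (F : Sym (Fin 3) (n + 1) → A) :
    ∑ p : Sym (Fin 3) n with i ∉ p, (F (l ::ₛ p) - F (j ::ₛ p)) =
      F (Sym.replicate (n + 1) l) - F (Sym.replicate (n + 1) j) := by
  have h := (sum_side_succ hij hil hjl F).symm.trans (sum_side_succ hil hij hjl.symm F)
  rw [Finset.sum_sub_distrib, sub_eq_sub_iff_add_eq_add, add_comm, ← h, add_comm]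

theorem sum_side_comp_coord {i j : Fin 3} (hij : i ≠ j) (g : ℕ → A) :
    ∑ p : Sym (Fin 3) n with i ∉ p, g (coord p j) = ∑ x ∈ Finset.range (n + 1), g x := by
  have hthird : ∀ i j : Fin 3, ∃ l, i ≠ l ∧ j ≠ l := by decide
  obtain ⟨l, hil, hjl⟩ := hthird i j
  induction n generalizing g with
  | zero => simp [Finset.univ_unique, coord, Sym.eq_nil_of_card_zero]
  | succ n ih =>
    rw [sum_side_succ hij hil hjl, coord_replicate, if_neg hjl.symm, Finset.sum_range_succ',
      add_comm]
    simp only [coord_cons, if_true, ih fun x => g (x + 1)]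

theorem card_side (i : Fin 3) : Finset.card {p : Sym (Fin 3) n | i ∉ p} = n + 1 := by
  have hi : i ≠ i + 1 := by lia
  simpa using sum_side_comp_coord hi fun _ => (1 : ℕ)

theorem two_mul_card_coord_lt (i : Fin 3) {r : ℕ} (hr : r ≤ n + 1) :
    2 * Finset.card {q : Sym (Fin 3) n | coord q i < r} + r * r = r * (2 * n + 3) := by
  induction n generalizing r with
  | zero => interval_cases r <;> simp [coord, Finset.univ_unique, Sym.eq_nil_of_card_zero]
  | succ n ih =>
    obtain _ | r := r
    · simp
    have hside : ∑ p : Sym (Fin 3) (n + 1) with i ∉ p, (if coord p i < r + 1 then 1 else 0) =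
        n + 2 := by
      rw [Finset.sum_congr rfl fun p hp => if_pos
        (by rw [coord_eq_zero.mpr (Finset.mem_filter.mp hp).2]; exact r.succ_pos),
        ← Finset.card_eq_sum_ones, card_side]
    have hrec := ih (r := r) (by lia)
    rw [Finset.card_filter] at hrec ⊢
    rw [sum_sym_succ i, hside]
    simp only [coord_cons, if_true, add_lt_add_iff_right]
    linarith

theorem sum_side_excess {m : ℕ} (hn : n + 1 = 3 * m) (k : Fin 3) :
    (∑ p : Sym (Fin 3) n with k ∉ p, excess m p) + m = m * m := by
  have hrow (i : Fin 3) : ∑ p : Sym (Fin 3) n with k ∉ p, (coord p i - 2 * m) =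
      if i = k then 0 else ∑ x ∈ Finset.range m, x := by
    split_ifs with hik
    · subst hik
      exact Finset.sum_eq_zero fun p hp => by
        rw [coord_eq_zero.mpr (Finset.mem_filter.mp hp).2, Nat.zero_sub]
    · rw [sum_side_comp_coord (Ne.symm hik) (· - 2 * m), hn, show 3 * m = 2 * m + m by ring,
        Finset.sum_range_add, Finset.sum_eq_zero fun x hx => by grind, zero_add]
      simp only [Nat.add_sub_cancel_left]
  have htwo : (∑ i, if i = k then 0 else ∑ x ∈ Finset.range m, x) = m * (m - 1) := by
    rw [← Finset.sum_range_id_mul_two, Fin.sum_univ_three]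
    fin_cases k <;> simp [mul_two]
  simp only [excess]
  rw [Finset.sum_comm, Finset.sum_congr rfl fun i _ => hrow i, htwo, Nat.mul_sub_one,
    Nat.sub_add_cancel (Nat.le_mul_self m)]

theorem sum_meshWeight {m : ℕ} (hm : n + 2 = 3 * m) (k : Fin 3) :
    ∑ p : Sym (Fin 3) (n + 1), meshWeight m p k = m * (11 * m + 1) := by
  have hside : ∑ p : Sym (Fin 3) (n + 1) with k ∉ p, meshWeight m p k =
      3 * m * (2 * m + 1) + ∑ p : Sym (Fin 3) (n + 1) with k ∉ p, excess m p := by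
    simp only [meshWeight]
    rw [Finset.sum_congr rfl fun p hp => if_pos (Finset.mem_filter.mp hp).2,
      Finset.sum_add_distrib, Finset.sum_const, card_side, smul_eq_mul, hm]
  have hinner : ∑ q : Sym (Fin 3) n, meshWeight m (k ::ₛ q) k =
      Finset.card {q : Sym (Fin 3) n | coord q k < 2 * m} := by
    simp only [meshWeight, Sym.mem_cons_self, not_true, if_false, coord_cons, if_true,
      Nat.succ_le_iff, Finset.card_filter]
  have hcard := two_mul_card_coord_lt k (n := n) (r := 2 * m) (by lia)
  have hexcess := sum_side_excess hm k
  rw [sum_sym_succ k, hside, hinner]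
  rw [show 2 * n + 3 = 6 * m - 1 by lia, Nat.mul_sub] at hcard
  lia

end SideSums

/-- The nodes of the planar dual of the mesh of side `n + 2`: the three sides of the big triangle,
the upward triangles `{i ::ₛ p}` and the downward triangles `{i ::ₛ j ::ₛ q | i ≠ j}`. -/
inductive DualNode (n : ℕ)
  | side (k : Fin 3)
  | up (p : Sym (Fin 3) (n + 1))
  | down (q : Sym (Fin 3) n)

namespace DualNode

variable {n : ℕ}

/-- The dual node on the other side of the edge opposite to corner `k` in the upward triangle
`p`. -/
def across (p : Sym (Fin 3) (n + 1)) (k : Fin 3) : DualNode n :=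
  if h : k ∈ p then down (p.erase k h) else side k

theorem across_of_notMem {p : Sym (Fin 3) (n + 1)} {k : Fin 3} (h : k ∉ p) :
    across p k = side k :=
  dif_neg h

theorem across_cons (k : Fin 3) (q : Sym (Fin 3) n) : across (k ::ₛ q) k = down q := by
  simp [across]

theorem sum_ite_across {A : Type*} [AddCommMonoid A] (K : DualNode n → Prop) [DecidablePred K]
    (k : Fin 3) (g : Sym (Fin 3) (n + 1) → A) :
    ∑ p, (if K (across p k) then g p else 0) =
      (if K (side k) then ∑ p with k ∉ p, g p else 0) +
        ∑ q, if K (down q) then g (k ::ₛ q) else 0 := by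
  have hside : ∑ p with k ∉ p, (if K (across p k) then g p else 0) =
      ∑ p with k ∉ p, if K (side k) then g p else 0 :=
    Finset.sum_congr rfl fun p hp => by rw [across_of_notMem (Finset.mem_filter.mp hp).2]
  simp only [sum_sym_succ k, across_cons, hside, Finset.sum_ite_irrel, Finset.sum_const_zero]

section Stokes

variable {A : Type*} [AddCommGroup A] (F : Sym (Fin 3) (n + 2) → A)

/-- The increment of `F` along the edge opposite to corner `k` in the upward triangle `p`, traversed
in the positive orientation of the triangle. -/
def increment (p : Sym (Fin 3) (n + 1)) (k : Fin 3) : A :=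
  F ((k + 2) ::ₛ p) - F ((k + 1) ::ₛ p)

theorem sum_increment (p : Sym (Fin 3) (n + 1)) : ∑ k, increment F p k = 0 := by
  rw [Fin.sum_univ_three]
  change (F (2 ::ₛ p) - F (1 ::ₛ p)) + (F (0 ::ₛ p) - F (2 ::ₛ p)) +
    (F (1 ::ₛ p) - F (0 ::ₛ p)) = 0
  abel

theorem sum_increment_cons (q : Sym (Fin 3) n) : ∑ k, increment F (k ::ₛ q) k = 0 := by
  rw [Fin.sum_univ_three]
  change (F (2 ::ₛ 0 ::ₛ q) - F (1 ::ₛ 0 ::ₛ q)) + (F (0 ::ₛ 1 ::ₛ q) - F (2 ::ₛ 1 ::ₛ q)) +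
    (F (1 ::ₛ 2 ::ₛ q) - F (0 ::ₛ 2 ::ₛ q)) = 0
  rw [Sym.cons_swap 0 1, Sym.cons_swap 0 2, Sym.cons_swap 1 2]
  abel

-- A discrete Stokes theorem on the region `K`: the increments around each triangle add up to zero,
-- and those along the boundary edges of `K` that lie inside the big triangle vanish by `hK`.
theorem sum_sides_sub_eq_zero (K : DualNode n → Prop) [DecidablePred K]
    (hK : ∀ p k, F ((k + 1) ::ₛ p) ≠ F ((k + 2) ::ₛ p) → (K (up p) ↔ K (across p k))) :
    ∑ k with K (side k),
      (F (Sym.replicate (n + 2) (k + 2)) - F (Sym.replicate (n + 2) (k + 1))) = 0 := by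
  have hside (k) : ∑ p : Sym (Fin 3) (n + 1) with k ∉ p, increment F p k =
      F (Sym.replicate (n + 2) (k + 2)) - F (Sym.replicate (n + 2) (k + 1)) :=
    sum_side_sub_eq_sub (by lia) (by lia) (by lia) F
  have hcross (p k) : (if K (across p k) then increment F p k else 0) =
      if K (up p) then increment F p k else 0 := by
    by_cases hF : F ((k + 1) ::ₛ p) = F ((k + 2) ::ₛ p)
    · simp only [increment, hF, sub_self, ite_self]
    · simp only [hK p k hF]
  have hups : ∑ k, ∑ p, (if K (across p k) then increment F p k else 0) = 0 := by
    simp only [hcross]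
    rw [Finset.sum_comm]
    simp only [Finset.sum_ite_irrel, sum_increment, Finset.sum_const_zero, ite_self]
  have hdowns : ∑ k, ∑ q, (if K (down q) then increment F (k ::ₛ q) k else 0) = 0 := by
    rw [Finset.sum_comm]
    simp only [Finset.sum_ite_irrel, sum_increment_cons, Finset.sum_const_zero, ite_self]
  simp only [sum_ite_across, Finset.sum_add_distrib, hdowns, add_zero, hside] at hups
  rwa [Finset.sum_filter]

end Stokes

/-- The endpoints of the dual of a mesh edge. -/
def ends (x : Sym (Fin 3) (n + 1) × Fin 3) : Sym2 (DualNode n) :=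
  s(up x.1, across x.1 x.2)

theorem reachable_side {f : Sym (Fin 3) (n + 2) → Fin 3}
    (hf : ∀ i, f (Sym.replicate (n + 2) i) = i) (i : Fin 3) :
    (SimpleGraph.fromEdgeSet (ends (n := n) '' cutEdges f)).Reachable (side 0) (side i) := by
  classical
  set G := SimpleGraph.fromEdgeSet (ends (n := n) '' cutEdges f)
  have hclosed (p k) (hpk : f ((k + 1) ::ₛ p) ≠ f ((k + 2) ::ₛ p)) :
      G.Reachable (side 0) (up p) ↔ G.Reachable (side 0) (across p k) := by
    have hne : up p ≠ across p k := by unfold across; split_ifs <;> simp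
    have hmem : (p, k) ∈ cutEdges f := Finset.mem_filter.mpr ⟨Finset.mem_univ _, hpk⟩
    have hadj : G.Adj (up p) (across p k) :=
      (SimpleGraph.fromEdgeSet_adj _).mpr ⟨⟨(p, k), hmem, rfl⟩, hne⟩
    exact ⟨fun h => h.trans hadj.reachable, fun h => h.trans hadj.symm.reachable⟩
  -- In `Fin 3`, where arithmetic is modulo `3`, every reachable side contributes `1` to the sum.
  have hsum := sum_sides_sub_eq_zero f (fun v => G.Reachable (side 0) v) hclosed
  have hone : ∀ k : Fin 3, k + 2 - (k + 1) = 1 := by decide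
  simp only [hf, hone, Finset.sum_const] at hsum
  have hall : ∀ s : Finset (Fin 3), 0 ∈ s → s.card • (1 : Fin 3) = 0 → ∀ i, i ∈ s := by decide
  exact (Finset.mem_filter.mp (hall _ (by simp) hsum i)).2

/-- A lower bound for the distance of a dual node to side `i`, where crossing a mesh edge costs its
weight: entering through side `i` costs at least `2 * m + 1` plus the depth inside the other two
corner regions, and moving away from it costs `2` per row, except in the region
`2 * m ≤ coord p i` where the edges parallel to side `i` are free. -/
def potential (m : ℕ) (i : Fin 3) : DualNode n → ℤ
  | side k => if k = i then 0 else 6 * m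
  | up p => 2 * m + 1 + min (2 * coord p i : ℤ) (4 * m) + excess m p - (coord p i - 2 * m : ℕ)
  | down q =>
    2 * m + 1 + min (2 * coord q i + 1 : ℤ) (4 * m) + excess m q - (coord q i - 2 * m : ℕ)

variable {m : ℕ}

theorem le_sum_potential (hm : n + 2 = 3 * m) (v : DualNode n) :
    12 * (m : ℤ) ≤ ∑ i, potential m i v := by
  rw [Fin.sum_univ_three]
  cases v with
  | side k => fin_cases k <;> grind [potential]
  | up p =>
    have := sum_coord p
    simp only [potential, excess, Fin.sum_univ_three] at this ⊢
    lia
  | down q =>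
    have := sum_coord q
    simp only [potential, excess, Fin.sum_univ_three] at this ⊢
    lia

theorem abs_potential_up_sub_down_le (hm : n + 2 = 3 * m) (i k : Fin 3) (q : Sym (Fin 3) n) :
    |potential m i (up (k ::ₛ q)) - potential m i (down q)| ≤ meshWeight m (k ::ₛ q) k := by
  have hk := coord_cons k q k
  have hi := coord_cons k q i
  have hexcess := excess_cons m k q
  rw [abs_le, meshWeight, if_neg (not_not.mpr (Sym.mem_cons_self k q))]
  simp only [potential]
  rcases eq_or_ne i k with rfl | hik
  · lia
  · have := add_coord_le hik q
    lia

theorem abs_potential_up_sub_side_le (hm : n + 2 = 3 * m) (i : Fin 3) {k : Fin 3}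
    {p : Sym (Fin 3) (n + 1)} (hk : k ∉ p) :
    |potential m i (up p) - potential m i (side k : DualNode n)| ≤ meshWeight m p k := by
  have hzero := coord_eq_zero.mpr hk
  have hsum := sum_coord p
  rw [abs_le, meshWeight, if_pos hk]
  simp only [potential, excess, Fin.sum_univ_three] at hsum ⊢
  rcases eq_or_ne k i with rfl | hki
  · grind
  · rw [if_neg hki]
    fin_cases k <;> fin_cases i <;> grind

theorem abs_potential_up_sub_across_le (hm : n + 2 = 3 * m) (i k : Fin 3)
    (p : Sym (Fin 3) (n + 1)) :
    |potential m i (up p) - potential m i (across p k)| ≤ meshWeight m p k := by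
  by_cases hk : k ∈ p
  · obtain ⟨q, rfl⟩ := Sym.exists_cons_of_mem hk
    rw [across_cons]
    exact abs_potential_up_sub_down_le hm i k q
  · rw [across_of_notMem hk]
    exact abs_potential_up_sub_side_le hm i hk

theorem le_sum_cutEdges_meshWeight (hm : n + 2 = 3 * m) {f : Sym (Fin 3) (n + 2) → Fin 3}
    (hf : ∀ i, f (Sym.replicate (n + 2) i) = i) :
    12 * (m : ℤ) ≤ ∑ x ∈ cutEdges f, (meshWeight m x.1 x.2 : ℤ) := by
  refine le_sum_weight_of_potentials (d := potential m) (fun _ _ => Nat.cast_nonneg _)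
    (reachable_side hf) ?_ fun v => ?_
  · rintro i ⟨p, k⟩ - u v huv
    have hlip := abs_le.mp (abs_potential_up_sub_across_le hm i k p)
    rcases Sym2.eq_iff.mp huv with ⟨rfl, rfl⟩ | ⟨rfl, rfl⟩
    · exact hlip.2
    · linarith [hlip.1]
  · simpa [potential] using le_sum_potential hm v

end DualNode

section Mesh

variable {n : ℕ}

/-- The position in the simplex of a lattice point of the triangle of side `n`, for `n ≠ 0`. -/
noncomputable def embed (p : Sym (Fin 3) n) (i : Fin 3) : ℝ := coord p i / n

theorem embed_mem_stdSimplex (hn : n ≠ 0) (p : Sym (Fin 3) n) : embed p ∈ stdSimplex ℝ (Fin 3) := by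
  refine ⟨fun i => by unfold embed; positivity, ?_⟩
  simp only [embed, ← Finset.sum_div, ← Nat.cast_sum, sum_coord]
  exact div_self (Nat.cast_ne_zero.mpr hn)

theorem embed_replicate (hn : n ≠ 0) (i : Fin 3) :
    embed (Sym.replicate n i) = Pi.single i 1 := by
  ext j
  rw [embed, coord_replicate, Pi.single_apply]
  rcases eq_or_ne i j with rfl | hij
  · simp [hn]
  · simp [hij, hij.symm]

theorem edgeLength_embed_cons {i j : Fin 3} (hij : i ≠ j) (p : Sym (Fin 3) n) :
    edgeLength embed s(i ::ₛ p, j ::ₛ p) = ((n + 1 : ℕ) : ℝ)⁻¹ := by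
  have hcoord (l : Fin 3) : |embed (i ::ₛ p) l - embed (j ::ₛ p) l| =
      ((if l = i then 1 else 0) + if l = j then 1 else 0) * ((n + 1 : ℕ) : ℝ)⁻¹ := by
    rw [embed, embed, coord_cons, coord_cons, ← sub_div, abs_div, Nat.abs_cast, div_eq_mul_inv]
    split_ifs with hi hj <;> first | exact absurd (hi.symm.trans hj) hij | simp
  change 1 / 2 * ∑ l, |embed (i ::ₛ p) l - embed (j ::ₛ p) l| = _
  simp only [hcoord, ← Finset.sum_mul, Finset.sum_add_distrib, Finset.sum_ite_eq',
    Finset.mem_univ, if_true]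
  ring

/-- The edges of the mesh of side `n + 2`. -/
def meshEdges (n : ℕ) : Finset (Sym2 (Sym (Fin 3) (n + 2))) := Finset.univ.image meshEnds

/-- The mesh weights as a function of unordered pairs of lattice points. The sum has at most one
term, but writing it as a sum makes it unnecessary to prove that `meshEnds` is injective. -/
noncomputable def edgeWeight (m : ℕ) (e : Sym2 (Sym (Fin 3) (n + 2))) : ℝ :=
  ∑ x with meshEnds x = e, (meshWeight m x.1 x.2 : ℝ)

theorem edgeWeight_nonneg (m : ℕ) (e : Sym2 (Sym (Fin 3) (n + 2))) : 0 ≤ edgeWeight m e :=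
  Finset.sum_nonneg fun _ _ => Nat.cast_nonneg _

theorem sum_edgeWeight_mul (m : ℕ) (g : Sym2 (Sym (Fin 3) (n + 2)) → ℝ) :
    ∑ e ∈ meshEdges n, edgeWeight m e * g e =
      ∑ x : Sym (Fin 3) (n + 1) × Fin 3, meshWeight m x.1 x.2 * g (meshEnds x) := by
  rw [← Finset.sum_fiberwise_of_maps_to fun x _ => Finset.mem_image_of_mem meshEnds
    (Finset.mem_univ x)]
  refine Finset.sum_congr rfl fun e _ => ?_
  rw [edgeWeight, Finset.sum_mul]
  exact Finset.sum_congr rfl fun x hx => by rw [(Finset.mem_filter.mp hx).2]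

theorem sum_edgeWeight_mul_edgeLength {m : ℕ} (hm : n + 2 = 3 * m) :
    ∑ e ∈ meshEdges n, edgeWeight m e * edgeLength embed e = 11 * m + 1 := by
  have hm0 : (m : ℝ) ≠ 0 := Nat.cast_ne_zero.mpr (by lia)
  have hvol : ∑ x : Sym (Fin 3) (n + 1) × Fin 3, (meshWeight m x.1 x.2 : ℝ) =
      3 * (m * (11 * m + 1)) := by
    rw [Fintype.sum_prod_type_right]
    exact_mod_cast (by simp [sum_meshWeight hm])
  have hlength (x : Sym (Fin 3) (n + 1) × Fin 3) :
      edgeLength embed (meshEnds x) = ((n + 2 : ℕ) : ℝ)⁻¹ :=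
    edgeLength_embed_cons (by lia) x.1
  simp only [sum_edgeWeight_mul, hlength]
  rw [← Finset.sum_mul, hvol, hm]
  push_cast
  field_simp

theorem le_sum_bichromatic_mul_edgeWeight {m : ℕ} (hm : n + 2 = 3 * m)
    {f : Sym (Fin 3) (n + 2) → Fin 3} (hf : ∀ i, f (Sym.replicate (n + 2) i) = i) :
    12 * (m : ℝ) ≤ ∑ e ∈ meshEdges n, bichromatic f e * edgeWeight m e := by
  simp only [mul_comm (bichromatic f _), sum_edgeWeight_mul]
  calc 12 * (m : ℝ) ≤ ∑ x ∈ cutEdges f, (meshWeight m x.1 x.2 : ℝ) := by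
        exact_mod_cast DualNode.le_sum_cutEdges_meshWeight hm hf
    _ = ∑ x, meshWeight m x.1 x.2 * bichromatic f (meshEnds x) := by
        rw [cutEdges, Finset.sum_filter]
        refine Finset.sum_congr rfl fun x _ => ?_
        change _ = _ * (if _ then (0 : ℝ) else 1)
        split_ifs <;> simp_all

end Mesh

/-- For every positive integer `N` there is a weighted graph embedded in the
standard 2-simplex, with terminals mapped to the vertices of the simplex, whose embedded
volume is `11N + 1` while every 3-way cut (coloring separating the terminals) has total
bichromatic weight at least `12N`. Hence the integrality gap is at least `12N/(11N+1)`. -/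
theorem exists_graph_integrality_gap (N : ℕ) (hN : 0 < N) :
    ∃ (V : Type) (_ : Fintype V) (φ : V → Fin 3 → ℝ) (t : Fin 3 → V)
      (E : Finset (Sym2 V)) (w : Sym2 V → ℝ),
      (∀ v : V, φ v ∈ stdSimplex ℝ (Fin 3)) ∧
      (∀ i : Fin 3, φ (t i) = Pi.single i 1) ∧
      (∀ e ∈ E, 0 ≤ w e) ∧
      (∑ e ∈ E, w e * edgeLength φ e = 11 * (N : ℝ) + 1) ∧
      (∀ f : V → Fin 3, (∀ i : Fin 3, f (t i) = i) →
        12 * (N : ℝ) ≤ ∑ e ∈ E, bichromatic f e * w e) := by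
  obtain ⟨n, hn⟩ : ∃ n, n + 2 = 3 * N := ⟨3 * N - 2, by lia⟩
  exact ⟨Sym (Fin 3) (n + 2), inferInstance, embed, Sym.replicate (n + 2), meshEdges n,
    edgeWeight N, embed_mem_stdSimplex (by lia), embed_replicate (by lia),
    fun e _ => edgeWeight_nonneg N e, sum_edgeWeight_mul_edgeLength hn,
    fun _ => le_sum_bichromatic_mul_edgeWeight hn⟩
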